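/- Let f be an excursion and (f_n) a sequence of excursions with f_n → f for the Skorokhod topology. If there exists N ≥ 1 such that every f_n has at most N jumps (i.e. #{t : Δ_t(f_n) > 0} ≤ N), then d_L[f_n] → d_L[f] and d_T[f_n] → d_T[f] uniformly on [0,1]², and consequently d_V[f_n] → d_V[f] uniformly on [0,1]². -/

import Mathlib

open Set Filter Topology
open scoped Classical

noncomputable section

/-- Left limit of `f` at `t`, with the convention `f(0−) = 0`. -/
def lm (f : ℝ → ℝ) (t : ℝ) : ℝ := if t = 0 then 0 else Function.leftLim f t

/-- The jump `Δ_t(f) = f t − f(t−)`. -/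
def jump (f : ℝ → ℝ) (t : ℝ) : ℝ := f t - lm f t

/-- `inf_{[s,t]} f`. -/
def infIcc (f : ℝ → ℝ) (s t : ℝ) : ℝ := sInf (f '' Icc s t)

/-- An excursion: a càdlàg function on `[0,1]`, nonnegative, vanishing at `1` (and
extended by `0` outside `[0,1]`), all of whose jumps are nonnegative. -/
structure IsExcursion (f : ℝ → ℝ) : Prop where
  nonneg : ∀ t ∈ Icc (0:ℝ) 1, 0 ≤ f t
  zero_outside : ∀ t, t ∉ Icc (0:ℝ) 1 → f t = 0
  rightCont : ∀ t ∈ Ico (0:ℝ) 1, Tendsto f (𝓝[>] t) (𝓝 (f t))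
  leftLimEx : ∀ t ∈ Ioc (0:ℝ) 1, Tendsto f (𝓝[<] t) (𝓝 (Function.leftLim f t))
  one : f 1 = 0
  jump_nonneg : ∀ t ∈ Icc (0:ℝ) 1, 0 ≤ jump f t

/-- The genealogical relation `s ⪯_f t` : `s ≤ t` and `f(s−) ≤ inf_{[s,t]} f`. -/
def pre (f : ℝ → ℝ) (s t : ℝ) : Prop := s ≤ t ∧ lm f s ≤ infIcc f s t

/-- `x_s^t(f) = 1_{s ≤ t} · max(inf_{[s,t]} f − f(s−), 0)`. -/
def xst (f : ℝ → ℝ) (s t : ℝ) : ℝ := if s ≤ t then max (infIcc f s t - lm f s) 0 else 0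

/-- The most recent common ancestor `s ∧_f t`. -/
def mrca (f : ℝ → ℝ) (s t : ℝ) : ℝ := sSup {r : ℝ | 0 ≤ r ∧ pre f r s ∧ pre f r t}

/-- `δ_t(a,b) = min(|a−b|, Δ_t(f) − |a−b|)`, the circle pseudo-distance on `[0, Δ_t(f)]`. -/
def cdel (f : ℝ → ℝ) (t a b : ℝ) : ℝ := min |a - b| (jump f t - |a - b|)

/-- `d_O(s,t) = ∑_{s ≺_f r ⪯_f t} δ_r(0, x_r^t)`. -/
def dO (f : ℝ → ℝ) (s t : ℝ) : ℝ :=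
  ∑' r : ℝ, if pre f s r ∧ s < r ∧ pre f r t then cdel f r 0 (xst f r t) else 0

/-- `d_T(s,t) = f t − inf_{[s,t]} f − ∑_{s ≺_f r ⪯_f t} x_r^t`, intended for `s ⪯_f t`. -/
def dTanc (f : ℝ → ℝ) (s t : ℝ) : ℝ :=
  f t - infIcc f s t - ∑' r : ℝ, if pre f s r ∧ s < r ∧ pre f r t then xst f r t else 0

/-- The looptree pseudo-distance `d_L[f]`. -/
def dL (f : ℝ → ℝ) (s t : ℝ) : ℝ :=
  cdel f (mrca f s t) (xst f (mrca f s t) s) (xst f (mrca f s t) t)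
    + dO f (mrca f s t) s + dO f (mrca f s t) t

/-- The tree pseudo-distance `d_T[f]`. -/
def dT (f : ℝ → ℝ) (s t : ℝ) : ℝ := dTanc f (mrca f s t) s + dTanc f (mrca f s t) t

/-- The vernation pseudo-distance `d_V[f] = d_T[f] + 2·d_L[f]`. -/
def dV (f : ℝ → ℝ) (s t : ℝ) : ℝ := dT f s t + 2 * dL f s t

/-- `Jf(t) = ∑_{r ⪯_f t} x_r^t(f)`. -/
def Jop (f : ℝ → ℝ) (t : ℝ) : ℝ := ∑' r : ℝ, if pre f r t then xst f r t else 0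

/-- `J^ε f(t) = ∑_{r ⪯_f t, Δ_r(f) ≥ ε} x_r^t(f)`. -/
def Jeps (f : ℝ → ℝ) (ε : ℝ) (t : ℝ) : ℝ :=
  ∑' r : ℝ, if pre f r t ∧ ε ≤ jump f r then xst f r t else 0

/-- Pure jump growth (PJG) excursion: `f(t) = ∑_{r ⪯_f t} x_r^t(f)` on `[0,1]`. -/
def IsPJG (f : ℝ → ℝ) : Prop := ∀ t ∈ Icc (0:ℝ) 1, f t = Jop f t

/-- An increasing bijection from `[0,1]` onto itself. -/
def IncBij (l : ℝ → ℝ) : Prop :=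
  StrictMonoOn l (Icc (0:ℝ) 1) ∧ Set.BijOn l (Icc (0:ℝ) 1) (Icc (0:ℝ) 1)

/-- The Skorokhod distance `ρ` on functions `[0,1] → ℝ`. -/
def skor (f g : ℝ → ℝ) : ℝ :=
  sInf {c : ℝ | 0 ≤ c ∧ ∃ l : ℝ → ℝ, IncBij l ∧
    ∀ x ∈ Icc (0:ℝ) 1, |l x - x| ≤ c ∧ |f x - g (l x)| ≤ c}

/-!
Let `h = f - Jf`. For `m = s ∧ t` the tree distance is `d_T(s,t) = h(s) + h(t) - 2 h(m)`, and
`h(m) = inf_{[s,t]} h`, so that `d_T` is the distance of the real tree coded by `h`. The loop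
distance is the sum over all `r` of the circle distances `δ_r(x_r^s, x_r^t)`, because
`x_r^s = x_r^t` for `r < m` and one of the two vanishes for `r > m`.

Modulo `Δ_r` the point `x_r^t` depends continuously on `t`, since its only discontinuity is the jump
by `Δ_r` at `t = r`; the same jump cancels that of `f` in `h`. Hence `d_T` and `d_L` are continuous,
and uniformly so on the unit square, when `f` has finitely many jumps.

If a time change `λ` brings `f_n` within `c` of `f`, every term of the sums for `f_n` at `(s,t)` is
within `O(c)` of the corresponding term for `f` at `(λ s, λ t)`, and at most `2N` of these pairs of
terms are nonzero: each jump of `f` is matched to a jump of `f_n` once `c` is small, so that `f` has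
at most `N` jumps too. Therefore `d[f_n](s,t) = d[f](λ s, λ t) + O(N c)`, and uniform continuity of
`d[f]` removes `λ`.
-/

/-! ### Sums and infima -/

lemma sum_max_sub_zero_le_of_ordered {ι : Type*} [LinearOrder ι] {lo hi : ι → ℝ} {a b : ℝ}
    (J : Finset ι) (hab : a ≤ b) (hlo : ∀ r ∈ J, a ≤ lo r) (hhi : ∀ r ∈ J, hi r ≤ b)
    (hdisj : ∀ r ∈ J, ∀ r' ∈ J, r < r' → hi r ≤ lo r') :
    ∑ r ∈ J, max (hi r - lo r) 0 ≤ b - a := by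
  induction J using Finset.induction_on_max generalizing b with
  | empty => simpa using hab
  | insert m J hm ih =>
    have hbelow : ∑ r ∈ J, max (hi r - lo r) 0 ≤ min b (lo m) - a :=
      ih (le_min hab (hlo m (Finset.mem_insert_self m J)))
        (fun r hr => hlo r (Finset.mem_insert_of_mem hr))
        (fun r hr => le_min (hhi r (Finset.mem_insert_of_mem hr))
          (hdisj r (Finset.mem_insert_of_mem hr) m (Finset.mem_insert_self m J) (hm r hr)))
        fun r hr r' hr' => hdisj r (Finset.mem_insert_of_mem hr) r' (Finset.mem_insert_of_mem hr')
    have htop : max (hi m - lo m) 0 ≤ b - min b (lo m) :=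
      max_le (sub_le_sub (hhi m (Finset.mem_insert_self m J)) (min_le_right _ _))
        (sub_nonneg.2 (min_le_left _ _))
    rw [Finset.sum_insert fun h => (hm m h).false]
    linarith

lemma norm_tsum_sub_tsum_le {ι κ E : Type*} [Nonempty ι] [NormedAddCommGroup E] (e : ι ≃ κ)
    {a : ι → E} {b : κ → E} {N : ℕ} {B : ℝ}
    (ha : a.support.encard ≤ N) (hb : b.support.encard ≤ N)
    (h : ∀ r, ‖a r - b (e r)‖ ≤ B) : ‖∑' r, a r - ∑' r, b r‖ ≤ 2 * N * B := by
  obtain ⟨J, hJ⟩ := (finite_of_encard_le_coe ha).exists_finset_coe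
  obtain ⟨K, hK⟩ := (finite_of_encard_le_coe hb).exists_finset_coe
  rw [← hJ, encard_coe_eq_coe_finsetCard, Nat.cast_le] at ha
  rw [← hK, encard_coe_eq_coe_finsetCard, Nat.cast_le] at hb
  set S := J ∪ K.map e.symm.toEmbedding
  have hSN : S.card ≤ 2 * N :=
    (Finset.card_union_le _ _).trans (by rw [Finset.card_map]; omega)
  have haS : ∀ r ∉ S, a r = 0 := fun r hr => by
    by_contra h
    exact hr (Finset.mem_union_left _ (Finset.mem_coe.1 (hJ ▸ h)))
  have hbS : ∀ r ∉ S, b (e r) = 0 := fun r hr => by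
    by_contra h
    refine hr (Finset.mem_union_right _ (Finset.mem_map.2 ⟨e r, ?_, e.symm_apply_apply r⟩))
    exact Finset.mem_coe.1 (hK ▸ h)
  rw [← e.tsum_eq b, tsum_eq_sum haS, tsum_eq_sum hbS, ← Finset.sum_sub_distrib]
  have hB : 0 ≤ B := (norm_nonneg _).trans (h (Classical.arbitrary ι))
  calc ‖∑ r ∈ S, (a r - b (e r))‖ ≤ ∑ r ∈ S, ‖a r - b (e r)‖ := norm_sum_le _ _
    _ ≤ S.card * B := by
      rw [← nsmul_eq_mul]
      exact Finset.sum_le_card_nsmul _ _ _ fun r _ => h r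
    _ ≤ 2 * N * B := by gcongr; exact_mod_cast hSN

section InfIcc

variable {f g : ℝ → ℝ} {s t : ℝ}

lemma infIcc_le (hf : BddBelow (range f)) {u : ℝ} (hsu : s ≤ u) (hut : u ≤ t) :
    infIcc f s t ≤ f u :=
  csInf_le (hf.mono (image_subset_range _ _)) ⟨u, ⟨hsu, hut⟩, rfl⟩

lemma le_infIcc {a : ℝ} (hst : s ≤ t) (h : ∀ u, s ≤ u → u ≤ t → a ≤ f u) : a ≤ infIcc f s t :=
  le_csInf ⟨f s, s, ⟨le_rfl, hst⟩, rfl⟩ (by rintro _ ⟨u, hu, rfl⟩; exact h u hu.1 hu.2)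

lemma exists_lt_of_infIcc_lt {a : ℝ} (hst : s ≤ t) (h : infIcc f s t < a) :
    ∃ u, s ≤ u ∧ u ≤ t ∧ f u < a := by
  contrapose! h
  exact le_infIcc hst h

lemma infIcc_anti (hf : BddBelow (range f)) {s' t' : ℝ} (hst : s ≤ t) (hs : s' ≤ s)
    (ht : t ≤ t') : infIcc f s' t' ≤ infIcc f s t :=
  le_infIcc hst fun _ hsu hut => infIcc_le hf (hs.trans hsu) (hut.trans ht)

lemma infIcc_self (f : ℝ → ℝ) (s : ℝ) : infIcc f s s = f s := by simp [infIcc]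

lemma abs_infIcc_sub_le (hf : BddBelow (range f)) (hg : BddBelow (range g)) (L : ℝ ≃o ℝ) {c : ℝ}
    (h : ∀ x, |g x - f (L x)| ≤ c) (hst : s ≤ t) :
    |infIcc g s t - infIcc f (L s) (L t)| ≤ c := by
  have hle : infIcc g s t - c ≤ infIcc f (L s) (L t) := by
    refine le_infIcc (L.monotone hst) fun u hsu hut => ?_
    have hg := infIcc_le hg (L.le_symm_apply.2 hsu) (L.symm_apply_le.2 hut)
    have hgf := (abs_le.1 (h (L.symm u))).2
    rw [L.apply_symm_apply] at hgf
    linarith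
  have hge : infIcc f (L s) (L t) - c ≤ infIcc g s t := by
    refine le_infIcc hst fun u hsu hut => ?_
    linarith [infIcc_le hf (L.monotone hsu) (L.monotone hut), (abs_le.1 (h u)).1]
  exact abs_le.2 ⟨by linarith, by linarith⟩

lemma continuous_infIcc_min_max (hf : Continuous f) :
    Continuous fun p : ℝ × ℝ => infIcc f (min p.1 p.2) (max p.1 p.2) := by
  have hseg : ∀ p : ℝ × ℝ, infIcc f (min p.1 p.2) (max p.1 p.2)
      = sInf ((fun θ => f ((1 - θ) * p.1 + θ * p.2)) '' Icc (0 : ℝ) 1) := fun p => by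
    change sInf (f '' uIcc p.1 p.2) = _
    rw [← segment_eq_uIcc, segment_eq_image, image_image]
    simp only [smul_eq_mul]
  simp only [hseg]
  exact isCompact_Icc.continuous_sInf (by fun_prop)

end InfIcc

/-! ### Excursions as functions on the line -/

namespace IsExcursion

variable {f : ℝ → ℝ} {s t r : ℝ}

lemma zero_le (hf : IsExcursion f) (t : ℝ) : 0 ≤ f t :=
  if ht : t ∈ Icc (0 : ℝ) 1 then hf.nonneg t ht else (hf.zero_outside t ht).ge

lemma bddBelow (hf : IsExcursion f) : BddBelow (range f) :=
  ⟨0, forall_mem_range.2 hf.zero_le⟩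

lemma infIcc_nonneg (hf : IsExcursion f) (hst : s ≤ t) : 0 ≤ infIcc f s t :=
  le_infIcc hst fun u _ _ => hf.zero_le u

lemma tendsto_lm (hf : IsExcursion f) (t : ℝ) : Tendsto f (𝓝[<] t) (𝓝 (lm f t)) := by
  have heq : f =ᶠ[𝓝[<] t] 0 → Tendsto f (𝓝[<] t) (𝓝 0) :=
    fun h => tendsto_const_nhds.congr' h.symm
  rcases lt_trichotomy t 0 with ht | rfl | ht
  · have h0 := heq <| eventually_nhdsWithin_of_forall fun u hu =>
      hf.zero_outside u fun h => (h.1.trans_lt (hu.trans ht)).false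
    rwa [lm, if_neg ht.ne, leftLim_eq_of_tendsto h0]
  · rw [lm, if_pos rfl]
    exact heq <| eventually_nhdsWithin_of_forall fun u hu =>
      hf.zero_outside u fun h => (h.1.trans_lt hu).false
  rw [lm, if_neg ht.ne']
  rcases le_or_gt t 1 with ht1 | ht1
  · exact hf.leftLimEx t ⟨ht, ht1⟩
  · have h0 := heq <| eventually_nhdsWithin_of_eventually_nhds <|
      (lt_mem_nhds ht1).mono fun u hu => hf.zero_outside u fun h => (hu.trans_le h.2).false
    rwa [leftLim_eq_of_tendsto h0]

lemma tendsto_nhdsGT (hf : IsExcursion f) (t : ℝ) : Tendsto f (𝓝[>] t) (𝓝 (f t)) := by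
  by_cases ht : t ∈ Ico (0 : ℝ) 1
  · exact hf.rightCont t ht
  have hzero : ∀ᶠ u in 𝓝[≥] t, f u = 0 := by
    rcases lt_or_ge t 0 with ht0 | ht0
    · filter_upwards [eventually_nhdsWithin_of_eventually_nhds (gt_mem_nhds ht0)] with u hu
      exact hf.zero_outside u fun h => (hu.trans_le h.1).false
    have ht1 : 1 ≤ t := not_lt.1 fun h => ht ⟨ht0, h⟩
    filter_upwards [self_mem_nhdsWithin] with u hu
    rcases (ht1.trans hu).eq_or_lt with rfl | hu1
    exacts [hf.one, hf.zero_outside u fun h => (h.2.trans_lt hu1).false]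
  rw [hzero.self_of_nhdsWithin self_mem_Ici]
  exact tendsto_const_nhds.congr' <| nhdsWithin_mono t Ioi_subset_Ici_self <|
    hzero.mono fun _ h => h.symm

lemma lm_nonneg (hf : IsExcursion f) (t : ℝ) : 0 ≤ lm f t :=
  ge_of_tendsto' (hf.tendsto_lm t) hf.zero_le

lemma jump_eq_zero (hf : IsExcursion f) (ht : t ∉ Icc (0 : ℝ) 1) : jump f t = 0 := by
  have hzero : ∀ᶠ u in 𝓝 t, 0 = f u :=
    (isClosed_Icc.isOpen_compl.eventually_mem ht).mono fun u hu => (hf.zero_outside u hu).symm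
  have hlm : lm f t = 0 := tendsto_nhds_unique (hf.tendsto_lm t)
    (tendsto_const_nhds.congr' (eventually_nhdsWithin_of_eventually_nhds hzero))
  rw [jump, ← hzero.self_of_nhds, hlm, sub_zero]

lemma zero_le_jump (hf : IsExcursion f) (t : ℝ) : 0 ≤ jump f t :=
  if ht : t ∈ Icc (0 : ℝ) 1 then hf.jump_nonneg t ht else (hf.jump_eq_zero ht).ge

lemma lm_le (hf : IsExcursion f) (t : ℝ) : lm f t ≤ f t :=
  sub_nonneg.1 (hf.zero_le_jump t)

lemma le_lm {a : ℝ} (hf : IsExcursion f) (hst : s < t) (h : ∀ u, s ≤ u → u < t → a ≤ f u) :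
    a ≤ lm f t :=
  ge_of_tendsto (hf.tendsto_lm t) <| by
    filter_upwards [Ico_mem_nhdsLT hst] with u hu using h u hu.1 hu.2

lemma exists_lt_of_lt_lm {a : ℝ} (hf : IsExcursion f) (h : a < lm f t) :
    ∃ s < t, ∀ u, s ≤ u → u < t → a < f u := by
  obtain ⟨s, hst, hs⟩ :=
    mem_nhdsLT_iff_exists_Ico_subset.1 ((hf.tendsto_lm t).eventually_const_lt h)
  exact ⟨s, hst, fun u hsu hut => hs ⟨hsu, hut⟩⟩

lemma infIcc_le_lm (hf : IsExcursion f) (hsr : s < r) (hrt : r ≤ t) : infIcc f s t ≤ lm f r :=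
  hf.le_lm hsr fun _ hsu hur => infIcc_le hf.bddBelow hsu (hur.le.trans hrt)

lemma upperSemicontinuous (hf : IsExcursion f) : UpperSemicontinuous f := fun t =>
  upperSemicontinuousAt_iff.2 fun y hy => by
    rw [← nhdsLT_sup_nhdsGE, eventually_sup, ← Ioi_insert, nhdsWithin_insert, eventually_sup]
    exact ⟨(hf.tendsto_lm t).eventually_lt_const ((hf.lm_le t).trans_lt hy), eventually_pure.2 hy,
      (hf.tendsto_nhdsGT t).eventually_lt_const hy⟩

lemma bddAbove (hf : IsExcursion f) : BddAbove (range f) := by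
  obtain ⟨M, hM⟩ := (hf.upperSemicontinuous.upperSemicontinuousOn (Icc 0 1)).bddAbove_of_isCompact
    isCompact_Icc
  refine ⟨M, forall_mem_range.2 fun t => ?_⟩
  by_cases ht : t ∈ Icc (0 : ℝ) 1
  · exact hM (mem_image_of_mem f ht)
  · rw [hf.zero_outside t ht, ← hf.one]
    exact hM (mem_image_of_mem f (right_mem_Icc.2 zero_le_one))

end IsExcursion

/-! ### The genealogical order -/

section Genealogy

variable {f : ℝ → ℝ} {r s t : ℝ}

lemma xst_nonneg (f : ℝ → ℝ) (r t : ℝ) : 0 ≤ xst f r t := by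
  unfold xst
  split_ifs
  exacts [le_max_right _ _, le_rfl]

lemma xst_of_lt (htr : t < r) : xst f r t = 0 := if_neg htr.not_ge

lemma xst_of_pre (h : pre f s t) : xst f s t = infIcc f s t - lm f s := by
  rw [xst, if_pos h.1, max_eq_left (sub_nonneg.2 h.2)]

lemma pre_of_xst_ne_zero (h : xst f r t ≠ 0) : pre f r t := by
  by_contra hpre
  refine h (ite_eq_right_iff.2 fun hrt => max_eq_right (sub_nonpos.2 ?_))
  exact (not_le.1 fun hle => hpre ⟨hrt, hle⟩).le

lemma cdel_comm (f : ℝ → ℝ) (r a b : ℝ) : cdel f r a b = cdel f r b a := by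
  rw [cdel, cdel, abs_sub_comm]

namespace IsExcursion

lemma pre_refl (hf : IsExcursion f) (t : ℝ) : pre f t t :=
  ⟨le_rfl, (hf.lm_le t).trans_eq (infIcc_self f t).symm⟩

lemma xst_self (hf : IsExcursion f) (t : ℝ) : xst f t t = jump f t := by
  rw [xst_of_pre (hf.pre_refl t), infIcc_self, jump]

lemma xst_le_jump (hf : IsExcursion f) (r t : ℝ) : xst f r t ≤ jump f r := by
  unfold xst
  split_ifs with hrt
  · exact max_le (sub_le_sub_right (infIcc_le hf.bddBelow le_rfl hrt) _) (hf.zero_le_jump r)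
  · exact hf.zero_le_jump r

lemma xst_eq_zero (hf : IsExcursion f) (hr : jump f r = 0) (t : ℝ) : xst f r t = 0 :=
  ((hf.xst_le_jump r t).trans_eq hr).antisymm (xst_nonneg f r t)

lemma xst_eq_of_pre (hf : IsExcursion f) (hrs : r < s) (h : pre f s t) :
    xst f r t = xst f r s := by
  have hinf : infIcc f r t = infIcc f r s := by
    refine (infIcc_anti hf.bddBelow hrs.le le_rfl h.1).antisymm (le_infIcc (hrs.le.trans h.1) ?_)
    intro u hru hut
    rcases le_total u s with hus | hsu
    · exact infIcc_le hf.bddBelow hru hus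
    · exact ((hf.infIcc_le_lm hrs le_rfl).trans h.2).trans (infIcc_le hf.bddBelow hsu hut)
  rw [xst, xst, if_pos hrs.le, if_pos (hrs.le.trans h.1), hinf]

lemma cdel_self (hf : IsExcursion f) (r a : ℝ) : cdel f r a a = 0 := by
  rw [cdel, sub_self, abs_zero, sub_zero, min_eq_left (hf.zero_le_jump r)]

lemma cdel_zero_xst_nonneg (hf : IsExcursion f) (r t : ℝ) : 0 ≤ cdel f r 0 (xst f r t) := by
  rw [cdel, zero_sub, abs_neg, abs_of_nonneg (xst_nonneg f r t)]
  exact le_min (xst_nonneg f r t) (sub_nonneg.2 (hf.xst_le_jump r t))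

lemma cdel_zero_xst_le (f : ℝ → ℝ) (r t : ℝ) : cdel f r 0 (xst f r t) ≤ xst f r t := by
  rw [cdel, zero_sub, abs_neg, abs_of_nonneg (xst_nonneg f r t)]
  exact min_le_left _ _

/-! ### The height function -/

lemma sum_xst_le {a : ℝ} (hf : IsExcursion f) (J : Finset ℝ) (hat : a ≤ f t)
    (ha : ∀ r ∈ J, r ≤ t → a ≤ lm f r) : ∑ r ∈ J, xst f r t ≤ f t - a := by
  simp only [xst, ← Finset.sum_filter]
  refine sum_max_sub_zero_le_of_ordered _ hat ?_ ?_ ?_ <;> simp only [Finset.mem_filter]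
  · exact fun r hr => ha r hr.1 hr.2
  · exact fun r hr => infIcc_le hf.bddBelow hr.2 le_rfl
  · exact fun _ _ _ hr' hlt => hf.infIcc_le_lm hlt hr'.2

lemma summable_xst (hf : IsExcursion f) (t : ℝ) : Summable fun r => xst f r t :=
  summable_of_sum_le (fun r => xst_nonneg f r t) fun J =>
    hf.sum_xst_le J (hf.zero_le t) fun r _ _ => hf.lm_nonneg r

end IsExcursion

/-- The height `f t - Jf(t)`: `dT f` is the distance of the real tree coded by this function,
see `IsExcursion.dT_eq`. -/
def treeHeight (f : ℝ → ℝ) (t : ℝ) : ℝ := f t - Jop f t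

lemma treeHeight_eq (f : ℝ → ℝ) (t : ℝ) : treeHeight f t = f t - ∑' r, xst f r t := by
  have hite : ∀ r, (if pre f r t then xst f r t else 0) = xst f r t := fun r =>
    ite_eq_left_iff.2 fun h => not_not.1 fun hx => h (pre_of_xst_ne_zero (Ne.symm hx))
  rw [treeHeight, Jop, tsum_congr hite]

namespace IsExcursion

lemma bddBelow_treeHeight (hf : IsExcursion f) : BddBelow (range (treeHeight f)) := by
  refine ⟨0, forall_mem_range.2 fun t => ?_⟩
  rw [treeHeight_eq, sub_nonneg]
  refine Real.tsum_le_of_sum_le (fun r => xst_nonneg f r t) fun J => ?_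
  simpa using hf.sum_xst_le J (hf.zero_le t) fun r _ _ => hf.lm_nonneg r

lemma ite_ancestors_eq (hf : IsExcursion f) (h : pre f s t) {φ : ℝ → ℝ} (hφ : φ 0 = 0) :
    (if pre f s r ∧ s < r ∧ pre f r t then φ (xst f r t) else 0) =
      if s < r then φ (xst f r t) else 0 := by
  by_cases hx : xst f r t = 0
  · simp only [hx, hφ, ite_self]
  have hrt : pre f r t := pre_of_xst_ne_zero hx
  refine if_congr ⟨fun h => h.2.1, fun hsr => ⟨⟨hsr.le, ?_⟩, hsr, hrt⟩⟩ rfl rfl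
  exact h.2.trans (infIcc_anti hf.bddBelow hsr.le le_rfl hrt.1)

lemma dTanc_eq_tsum (hf : IsExcursion f) (h : pre f s t) :
    dTanc f s t = f t - infIcc f s t - ∑' r, if s < r then xst f r t else 0 :=
  congrArg (f t - infIcc f s t - ·) (tsum_congr fun _ => hf.ite_ancestors_eq h (φ := id) rfl)

lemma dTanc_nonneg (hf : IsExcursion f) (h : pre f s t) : 0 ≤ dTanc f s t := by
  rw [hf.dTanc_eq_tsum h, sub_nonneg]
  refine Real.tsum_le_of_sum_le (fun r => ite_nonneg (xst_nonneg f r t) le_rfl) fun J => ?_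
  rw [← Finset.sum_filter]
  refine hf.sum_xst_le _ (infIcc_le hf.bddBelow h.1 le_rfl) fun r hr hrt => ?_
  exact hf.infIcc_le_lm (Finset.mem_filter.1 hr).2 hrt

lemma dTanc_le (hf : IsExcursion f) (h : pre f s t) : dTanc f s t ≤ f t - infIcc f s t := by
  rw [hf.dTanc_eq_tsum h]
  exact sub_le_self _ (tsum_nonneg fun r => ite_nonneg (xst_nonneg f r t) le_rfl)

lemma dTanc_eq (hf : IsExcursion f) (h : pre f s t) :
    dTanc f s t = treeHeight f t - treeHeight f s := by
  have hsummable : Summable fun r => if s < r then xst f r t else 0 :=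
    (hf.summable_xst t).of_nonneg_of_le (fun r => ite_nonneg (xst_nonneg f r t) le_rfl)
      fun r => by split_ifs; exacts [le_rfl, xst_nonneg f r t]
  have hterm : ∀ r, xst f r t - xst f r s =
      (if s < r then xst f r t else 0) + if r = s then xst f s t - jump f s else 0 := fun r => by
    rcases lt_trichotomy r s with hrs | rfl | hsr
    · simp [hrs.not_gt, hrs.ne, hf.xst_eq_of_pre hrs h]
    · simp [hf.xst_self]
    · simp [hsr, hsr.ne', xst_of_lt hsr]
  have hsum : ∑' r, xst f r t - ∑' r, xst f r s =
      (∑' r, if s < r then xst f r t else 0) + (xst f s t - jump f s) := by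
    rw [← (hf.summable_xst t).tsum_sub (hf.summable_xst s), tsum_congr hterm,
      hsummable.tsum_add (hasSum_ite_eq s _).summable, tsum_ite_eq]
  rw [xst_of_pre h, jump] at hsum
  rw [hf.dTanc_eq_tsum h, treeHeight_eq, treeHeight_eq]
  linarith

lemma dO_eq (hf : IsExcursion f) (h : pre f s t) :
    dO f s t = ∑' r, if s < r then cdel f r 0 (xst f r t) else 0 :=
  tsum_congr fun r => hf.ite_ancestors_eq h (hf.cdel_self r 0)

end IsExcursion

/-! ### The most recent common ancestor -/

lemma le_mrca (hr : 0 ≤ r) (hrs : pre f r s) (hrt : pre f r t) : r ≤ mrca f s t :=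
  le_csSup ⟨s, fun _ hu => hu.2.1.1⟩ ⟨hr, hrs, hrt⟩

lemma mrca_comm (f : ℝ → ℝ) (s t : ℝ) : mrca f s t = mrca f t s := by
  simp only [mrca, and_comm]

namespace IsExcursion

lemma pre_zero (hf : IsExcursion f) (ht : 0 ≤ t) : pre f 0 t :=
  ⟨ht, by rw [lm, if_pos rfl]; exact hf.infIcc_nonneg ht⟩

lemma mrca_nonneg (hf : IsExcursion f) (hs : 0 ≤ s) (ht : 0 ≤ t) : 0 ≤ mrca f s t :=
  le_mrca le_rfl (hf.pre_zero hs) (hf.pre_zero ht)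

lemma pre_mrca_left (hf : IsExcursion f) (hs : 0 ≤ s) (ht : 0 ≤ t) : pre f (mrca f s t) s := by
  have hne : {r | 0 ≤ r ∧ pre f r s ∧ pre f r t}.Nonempty :=
    ⟨0, le_rfl, hf.pre_zero hs, hf.pre_zero ht⟩
  have hms : mrca f s t ≤ s := csSup_le hne fun r hr => hr.2.1.1
  refine ⟨hms, le_infIcc hms fun u hmu hus => ?_⟩
  by_contra! hlt
  obtain ⟨c, huc, hcm⟩ := exists_between hlt
  obtain ⟨v, hvm, hv⟩ := hf.exists_lt_of_lt_lm hcm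
  obtain ⟨r, hr, hvr⟩ := exists_lt_of_lt_csSup hne hvm
  have hrm : r ≤ mrca f s t := le_mrca hr.1 hr.2.1 hr.2.2
  have hcr : c ≤ lm f r := hf.le_lm hvr fun w hvw hwr => (hv w hvw (hwr.trans_le hrm)).le
  exact (huc.trans_le (hcr.trans hr.2.1.2)).not_ge (infIcc_le hf.bddBelow (hrm.trans hmu) hus)

lemma pre_mrca_right (hf : IsExcursion f) (hs : 0 ≤ s) (ht : 0 ≤ t) : pre f (mrca f s t) t :=
  mrca_comm f t s ▸ hf.pre_mrca_left ht hs

/-- The witness is the start of the last stretch before `s` on which `f` stays above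
`inf_{[s,t]} f`. -/
lemma exists_commonAncestor_infIcc_le (hf : IsExcursion f) (hs : 0 ≤ s) (hst : s ≤ t) :
    ∃ r, 0 ≤ r ∧ pre f r s ∧ pre f r t ∧ infIcc f s t ≤ infIcc f r t := by
  set a := infIcc f s t
  have hat : ∀ u, s ≤ u → u ≤ t → a ≤ f u := fun u => infIcc_le hf.bddBelow
  set A : Set ℝ := {v | 0 ≤ v ∧ v ≤ s ∧ ∀ u, v ≤ u → u ≤ s → a ≤ f u}
  have hsA : s ∈ A := ⟨hs, le_rfl, fun u hsu hus => hat u hsu (hus.trans hst)⟩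
  have hbdd : BddBelow A := ⟨0, fun v hv => hv.1⟩
  set r := sInf A
  have hr0 : 0 ≤ r := le_csInf ⟨s, hsA⟩ fun v hv => hv.1
  have hrs : r ≤ s := csInf_le hbdd hsA
  have hright : ∀ u, r < u → u ≤ t → a ≤ f u := fun u hru hut => by
    obtain ⟨v, hv, hvu⟩ := exists_lt_of_csInf_lt ⟨s, hsA⟩ hru
    exact (le_total u s).elim (hv.2.2 u hvu.le) fun hsu => hat u hsu hut
  have har : a ≤ f r := by
    rcases hrs.eq_or_lt with h | h
    · exact h ▸ hat s le_rfl hst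
    · refine ge_of_tendsto (hf.tendsto_nhdsGT r) ?_
      filter_upwards [Ioo_mem_nhdsGT h] with u hu using hright u hu.1 (hu.2.le.trans hst)
  have ha : ∀ u, r ≤ u → u ≤ t → a ≤ f u := fun u hru =>
    hru.eq_or_lt.elim (fun h _ => h ▸ har) (hright u)
  have hlm : lm f r ≤ a := by
    rcases hr0.eq_or_lt with h | h
    · rw [← h, lm, if_pos rfl]
      exact hf.infIcc_nonneg hst
    · by_contra! hlt
      obtain ⟨v, hvr, hv⟩ := hf.exists_lt_of_lt_lm hlt
      have hvA : max v 0 ∈ A := ⟨le_max_right _ _, max_le (hvr.le.trans hrs) hs, fun u hu hus =>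
        (lt_or_ge u r).elim (fun hur => (hv u ((le_max_left _ _).trans hu) hur).le)
          fun hru => ha u hru (hus.trans hst)⟩
      exact (max_lt hvr h).not_ge (csInf_le hbdd hvA)
  exact ⟨r, hr0, ⟨hrs, hlm.trans (le_infIcc hrs fun u hru hus => ha u hru (hus.trans hst))⟩,
    ⟨hrs.trans hst, hlm.trans (le_infIcc (hrs.trans hst) ha)⟩, le_infIcc (hrs.trans hst) ha⟩

lemma infIcc_le_infIcc_mrca (hf : IsExcursion f) (hs : 0 ≤ s) (hst : s ≤ t) :
    infIcc f s t ≤ infIcc f (mrca f s t) t := by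
  obtain ⟨r, hr0, hrs, hrt, hle⟩ := hf.exists_commonAncestor_infIcc_le hs hst
  exact hle.trans
    (infIcc_anti hf.bddBelow (hf.pre_mrca_right hs (hs.trans hst)).1 (le_mrca hr0 hrs hrt) le_rfl)

lemma infIcc_treeHeight (hf : IsExcursion f) (hs : 0 ≤ s) (hst : s ≤ t) :
    infIcc (treeHeight f) s t = treeHeight f (mrca f s t) := by
  set m := mrca f s t
  have hms : m ≤ s := (hf.pre_mrca_left hs (hs.trans hst)).1
  have hmt : pre f m t := hf.pre_mrca_right hs (hs.trans hst)
  have hpre : ∀ u, s ≤ u → u ≤ t → pre f m u := fun u hsu hut =>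
    ⟨hms.trans hsu, hmt.2.trans (infIcc_anti hf.bddBelow (hms.trans hsu) le_rfl hut)⟩
  refine le_antisymm (le_of_forall_pos_le_add fun ε hε => ?_) (le_infIcc hst fun u hsu hut => ?_)
  · obtain ⟨u, hsu, hut, hu⟩ := exists_lt_of_infIcc_lt hst (lt_add_of_pos_right (infIcc f s t) hε)
    have hle := hf.dTanc_le (hpre u hsu hut)
    rw [hf.dTanc_eq (hpre u hsu hut)] at hle
    linarith [infIcc_le hf.bddBelow_treeHeight hsu hut, hf.infIcc_le_infIcc_mrca hs hst,
      infIcc_anti hf.bddBelow (hpre u hsu hut).1 le_rfl hut]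
  · have hnonneg := hf.dTanc_nonneg (hpre u hsu hut)
    rwa [hf.dTanc_eq (hpre u hsu hut), sub_nonneg] at hnonneg

lemma dT_eq (hf : IsExcursion f) (hs : 0 ≤ s) (ht : 0 ≤ t) :
    dT f s t =
      treeHeight f s + treeHeight f t - 2 * infIcc (treeHeight f) (min s t) (max s t) := by
  have hinf : infIcc (treeHeight f) (min s t) (max s t) = treeHeight f (mrca f s t) := by
    rcases le_total s t with hst | hts
    · rw [min_eq_left hst, max_eq_right hst, hf.infIcc_treeHeight hs hst]
    · rw [min_eq_right hts, max_eq_left hts, mrca_comm, hf.infIcc_treeHeight ht hts]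
  rw [dT, hf.dTanc_eq (hf.pre_mrca_left hs ht), hf.dTanc_eq (hf.pre_mrca_right hs ht), hinf]
  ring

lemma dL_eq (hf : IsExcursion f) (hs : 0 ≤ s) (ht : 0 ≤ t) :
    dL f s t = ∑' r, cdel f r (xst f r s) (xst f r t) := by
  have hms := hf.pre_mrca_left hs ht
  have hmt := hf.pre_mrca_right hs ht
  set m := mrca f s t
  have hterm : ∀ r, cdel f r (xst f r s) (xst f r t) =
      (if r = m then cdel f m (xst f m s) (xst f m t) else 0) +
        (if m < r then cdel f r 0 (xst f r s) else 0) +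
        if m < r then cdel f r 0 (xst f r t) else 0 := fun r => by
    rcases lt_trichotomy r m with hrm | rfl | hmr
    · simp [hrm.ne, hrm.not_gt, hf.xst_eq_of_pre hrm hms, hf.xst_eq_of_pre hrm hmt, hf.cdel_self]
    · simp
    · simp only [hmr.ne', hmr, if_true, if_false, zero_add]
      by_cases hxs : xst f r s = 0
      · rw [hxs, hf.cdel_self, zero_add]
      have hxt : xst f r t = 0 := by
        by_contra hxt
        exact hmr.not_ge (le_mrca ((hf.mrca_nonneg hs ht).trans hmr.le)
          (pre_of_xst_ne_zero hxs) (pre_of_xst_ne_zero hxt))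
      rw [hxt, hf.cdel_self, add_zero, cdel_comm]
  have hsummable : ∀ u, Summable fun r => if m < r then cdel f r 0 (xst f r u) else 0 := fun u =>
    (hf.summable_xst u).of_nonneg_of_le (fun r => ite_nonneg (hf.cdel_zero_xst_nonneg r u) le_rfl)
      fun r => by split_ifs; exacts [cdel_zero_xst_le f r u, xst_nonneg f r u]
  have hsingle := (hasSum_ite_eq m (cdel f m (xst f m s) (xst f m t))).summable
  rw [dL, hf.dO_eq hms, hf.dO_eq hmt, tsum_congr hterm,
    (hsingle.add (hsummable s)).tsum_add (hsummable t), hsingle.tsum_add (hsummable s),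
    tsum_ite_eq]

end IsExcursion

/-! ### Continuity for finitely many jumps -/

/-- The amount by which `inf_{[r,t]} f` has descended into the jump of `f` at `r`. Modulo `Δ_r(f)`
it is the opposite of `x_r^t(f)`, so that it locates the same point of the circle, but unlike
`x_r^t(f)` it is continuous in `t`. -/
def circleCoord (f : ℝ → ℝ) (r t : ℝ) : ℝ := min (f r - infIcc f r (max r t)) (jump f r)

namespace IsExcursion

lemma continuous_infIcc_max (hf : IsExcursion f) (r : ℝ) :
    Continuous fun t => infIcc f r (max r t) := by
  refine continuous_iff_continuousAt.2 fun t => tendsto_order.2 ⟨fun a ha => ?_, fun b hb => ?_⟩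
  · obtain ⟨a', haa', ha'⟩ := exists_between ha
    have hT : a' < f (max r t) := ha'.trans_le (infIcc_le hf.bddBelow (le_max_left r t) le_rfl)
    obtain ⟨v, hTv, hv⟩ :=
      mem_nhdsGT_iff_exists_Ioo_subset.1 ((hf.tendsto_nhdsGT _).eventually_const_lt hT)
    filter_upwards [gt_mem_nhds ((le_max_right r t).trans_lt hTv)] with t' ht'
    refine haa'.trans_le (le_infIcc (le_max_left r t') fun u hru hut' => ?_)
    rcases le_or_gt u (max r t) with hu | hu
    · exact ha'.le.trans (infIcc_le hf.bddBelow hru hu)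
    · exact (hv ⟨hu, hut'.trans_lt (max_lt ((le_max_left r t).trans_lt hTv) ht')⟩).le
  · obtain ⟨u, hru, hut, hu⟩ := exists_lt_of_infIcc_lt (le_max_left r t) hb
    rcases hru.eq_or_lt with rfl | hru
    · exact .of_forall fun t' => (infIcc_le hf.bddBelow le_rfl (le_max_left _ _)).trans_lt hu
    · obtain ⟨v, hvu, hrv, hv⟩ : ∃ v < u, r < v ∧ f v < b :=
        (((hf.tendsto_lm u).eventually_lt_const ((hf.lm_le u).trans_lt hu)).and
          (Ioo_mem_nhdsLT hru)).exists.imp fun v hv => ⟨hv.2.2, hv.2.1, hv.1⟩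
      have hvt : v < t := (lt_max_iff.1 (hvu.trans_le hut)).resolve_left hrv.not_gt
      filter_upwards [lt_mem_nhds hvt] with t' ht'
      exact (infIcc_le hf.bddBelow hrv.le (ht'.le.trans (le_max_right r t'))).trans_lt hv

lemma continuous_circleCoord (hf : IsExcursion f) (r : ℝ) : Continuous (circleCoord f r) :=
  (continuous_const.sub (hf.continuous_infIcc_max r)).min continuous_const

lemma circleCoord_nonneg (hf : IsExcursion f) (r t : ℝ) : 0 ≤ circleCoord f r t :=
  le_min (sub_nonneg.2 (infIcc_le hf.bddBelow le_rfl (le_max_left r t))) (hf.zero_le_jump r)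

lemma circleCoord_of_lt (hf : IsExcursion f) (htr : t < r) : circleCoord f r t = 0 := by
  rw [circleCoord, max_eq_left htr.le, infIcc_self, sub_self, min_eq_left (hf.zero_le_jump r)]

lemma xst_eq_ite_sub_circleCoord (hf : IsExcursion f) (r t : ℝ) :
    xst f r t = (if r ≤ t then jump f r else 0) - circleCoord f r t := by
  rcases lt_or_ge t r with htr | hrt
  · rw [xst_of_lt htr, if_neg htr.not_ge, hf.circleCoord_of_lt htr, sub_zero]
  · rw [xst, if_pos hrt, if_pos hrt, circleCoord, max_eq_right hrt, ← max_sub_sub_left, sub_self,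
      jump]
    congr 1
    ring

lemma cdel_xst_eq_cdel_circleCoord (hf : IsExcursion f) (r s t : ℝ) :
    cdel f r (xst f r s) (xst f r t) = cdel f r (circleCoord f r s) (circleCoord f r t) := by
  have hy : ∀ u, |circleCoord f r u - jump f r| = jump f r - |circleCoord f r u| := fun u => by
    rw [abs_sub_comm, abs_of_nonneg (sub_nonneg.2 (min_le_right _ _)),
      abs_of_nonneg (hf.circleCoord_nonneg r u)]
  simp only [hf.xst_eq_ite_sub_circleCoord, cdel]
  rcases lt_or_ge s r with hs | hs <;> rcases lt_or_ge t r with ht | ht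
  · rw [if_neg hs.not_ge, if_neg ht.not_ge, sub_sub_sub_cancel_left, abs_sub_comm]
  · simp [hs.not_ge, ht, hf.circleCoord_of_lt hs, hy, min_comm]
  · simp [hs, ht.not_ge, hf.circleCoord_of_lt ht, abs_sub_comm (jump f r), hy, min_comm]
  · rw [if_pos hs, if_pos ht, sub_sub_sub_cancel_left, abs_sub_comm]

lemma continuousAt_xst (hf : IsExcursion f) (hrt : r ≠ t) : ContinuousAt (xst f r) t := by
  have hite : ContinuousAt (fun u => if r ≤ u then jump f r else 0) t := by
    rcases hrt.lt_or_gt with h | h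
    · exact continuousAt_const.congr ((lt_mem_nhds h).mono fun u hu => (if_pos hu.le).symm)
    · exact continuousAt_const.congr ((gt_mem_nhds h).mono fun u hu => (if_neg hu.not_ge).symm)
  exact (hite.sub (hf.continuous_circleCoord r).continuousAt).congr
    (.of_forall fun u => (hf.xst_eq_ite_sub_circleCoord r u).symm)

lemma continuousAt_sub_xst (hf : IsExcursion f) (t : ℝ) :
    ContinuousAt (fun u => f u - xst f t u) t := by
  have hjump : ContinuousAt (fun u => f u - if t ≤ u then jump f t else 0) t := by
    refine continuousAt_iff_continuous_left'_right'.2 ⟨?_, ?_⟩ <;>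
      rw [ContinuousWithinAt, if_pos le_rfl]
    · rw [jump, sub_sub_cancel]
      refine (hf.tendsto_lm t).congr' ?_
      filter_upwards [self_mem_nhdsWithin] with u hu
      rw [if_neg (not_le.2 hu), sub_zero]
    · refine ((hf.tendsto_nhdsGT t).sub_const (jump f t)).congr' ?_
      filter_upwards [self_mem_nhdsWithin] with u hu
      rw [if_pos (le_of_lt hu)]
  refine (hjump.add (hf.continuous_circleCoord t).continuousAt).congr (.of_forall fun u => ?_)
  simp only [Pi.add_apply, hf.xst_eq_ite_sub_circleCoord t u]
  ring

lemma continuous_treeHeight (hf : IsExcursion f) (hfin : (jump f).support.Finite) :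
    Continuous (treeHeight f) := by
  refine continuous_iff_continuousAt.2 fun t => ?_
  set J := insert t hfin.toFinset
  have hsum : ∀ u, f u - xst f t u - ∑ r ∈ J.erase t, xst f r u = treeHeight f u := fun u => by
    rw [treeHeight_eq, tsum_eq_sum (s := J) fun r hr => hf.xst_eq_zero (r := r) ?_ u,
      ← Finset.add_sum_erase J _ (Finset.mem_insert_self t _), sub_sub]
    by_contra hjump
    exact hr (Finset.mem_insert_of_mem (hfin.mem_toFinset.2 hjump))
  refine ContinuousAt.congr ?_ (.of_forall hsum)
  refine (hf.continuousAt_sub_xst t).sub (tendsto_finsetSum _ fun r hr => ?_)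
  exact hf.continuousAt_xst (Finset.ne_of_mem_erase hr)

lemma continuousOn_dT (hf : IsExcursion f) (hfin : (jump f).support.Finite) :
    ContinuousOn (fun p : ℝ × ℝ => dT f p.1 p.2) (Icc 0 1 ×ˢ Icc 0 1) := by
  have hh := hf.continuous_treeHeight hfin
  refine ((((hh.comp continuous_fst).add (hh.comp continuous_snd)).sub
    ((continuous_infIcc_min_max hh).const_mul 2)).continuousOn).congr fun p hp => ?_
  exact hf.dT_eq hp.1.1 hp.2.1

lemma continuousOn_dL (hf : IsExcursion f) (hfin : (jump f).support.Finite) :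
    ContinuousOn (fun p : ℝ × ℝ => dL f p.1 p.2) (Icc 0 1 ×ˢ Icc 0 1) := by
  have hcont : Continuous fun p : ℝ × ℝ =>
      ∑ r ∈ hfin.toFinset, cdel f r (circleCoord f r p.1) (circleCoord f r p.2) := by
    unfold cdel
    have := hf.continuous_circleCoord
    fun_prop
  refine hcont.continuousOn.congr fun p hp => ?_
  simp only [hf.dL_eq hp.1.1 hp.2.1, ← hf.cdel_xst_eq_cdel_circleCoord]
  refine tsum_eq_sum fun r hr => ?_
  have hr : jump f r = 0 := by simpa using hr
  rw [hf.xst_eq_zero hr, hf.xst_eq_zero hr, hf.cdel_self]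

end IsExcursion

end Genealogy

/-! ### Stability under a change of time -/

namespace IsExcursion

variable {f g : ℝ → ℝ} {L : ℝ ≃o ℝ} {c : ℝ} {N : ℕ}

lemma abs_lm_sub_le (hf : IsExcursion f) (hg : IsExcursion g) (h : ∀ x, |g x - f (L x)| ≤ c)
    (r : ℝ) : |lm g r - lm f (L r)| ≤ c := by
  have hL : Tendsto L (𝓝[<] r) (𝓝[<] L r) :=
    tendsto_nhdsWithin_iff.2 ⟨L.continuous.continuousWithinAt,
      eventually_nhdsWithin_of_forall fun _ hu => L.strictMono hu⟩
  exact le_of_tendsto' ((hg.tendsto_lm r).sub ((hf.tendsto_lm (L r)).comp hL)).abs h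

lemma abs_jump_sub_le (hf : IsExcursion f) (hg : IsExcursion g) (h : ∀ x, |g x - f (L x)| ≤ c)
    (r : ℝ) : |jump g r - jump f (L r)| ≤ 2 * c := by
  rw [jump, jump, sub_sub_sub_comm, two_mul]
  exact (abs_sub _ _).trans (add_le_add (h r) (hf.abs_lm_sub_le hg h r))

lemma abs_xst_sub_le (hf : IsExcursion f) (hg : IsExcursion g) (h : ∀ x, |g x - f (L x)| ≤ c)
    (r t : ℝ) : |xst g r t - xst f (L r) (L t)| ≤ 2 * c := by
  rcases lt_or_ge t r with htr | hrt
  · rw [xst_of_lt htr, xst_of_lt (L.strictMono htr), sub_self, abs_zero]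
    linarith [(abs_nonneg _).trans (h r)]
  rw [xst, xst, if_pos hrt, if_pos (L.monotone hrt)]
  refine (abs_max_sub_max_le_abs _ _ _).trans ?_
  rw [sub_sub_sub_comm, two_mul]
  exact (abs_sub _ _).trans
    (add_le_add (abs_infIcc_sub_le hf.bddBelow hg.bddBelow L h hrt) (hf.abs_lm_sub_le hg h r))

lemma abs_cdel_sub_le (hf : IsExcursion f) (hg : IsExcursion g) (h : ∀ x, |g x - f (L x)| ≤ c)
    (r s t : ℝ) : |cdel g r (xst g r s) (xst g r t) -
      cdel f (L r) (xst f (L r) (L s)) (xst f (L r) (L t))| ≤ 6 * c := by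
  have hs := abs_le.1 (hf.abs_xst_sub_le hg h r s)
  have ht := abs_le.1 (hf.abs_xst_sub_le hg h r t)
  have hj := abs_le.1 (hf.abs_jump_sub_le hg h r)
  have hdist : |(|xst g r s - xst g r t| - |xst f (L r) (L s) - xst f (L r) (L t)|)| ≤ 4 * c :=
    (abs_abs_sub_abs_le _ _).trans (abs_le.2 ⟨by linarith, by linarith⟩)
  have hdist' := abs_le.1 hdist
  refine (abs_min_sub_min_le_max _ _ _ _).trans (max_le ?_ (abs_le.2 ⟨?_, ?_⟩)) <;> linarith

lemma encard_support_xst_le (hf : IsExcursion f) (hN : (jump f).support.encard ≤ N) (t : ℝ) :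
    (Function.support fun r => xst f r t).encard ≤ N :=
  (encard_le_encard <| Function.support_subset_iff'.2 fun _ hr =>
    hf.xst_eq_zero (Function.notMem_support.1 hr) t).trans hN

lemma encard_support_cdel_le (hf : IsExcursion f) (hN : (jump f).support.encard ≤ N) (s t : ℝ) :
    (Function.support fun r => cdel f r (xst f r s) (xst f r t)).encard ≤ N := by
  refine (encard_le_encard <| Function.support_subset_iff'.2 fun r hr => ?_).trans hN
  have hjump := Function.notMem_support.1 hr
  rw [hf.xst_eq_zero hjump, hf.xst_eq_zero hjump, hf.cdel_self]

lemma abs_treeHeight_sub_le (hf : IsExcursion f) (hg : IsExcursion g)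
    (h : ∀ x, |g x - f (L x)| ≤ c) (hfN : (jump f).support.encard ≤ N)
    (hgN : (jump g).support.encard ≤ N) (t : ℝ) :
    |treeHeight g t - treeHeight f (L t)| ≤ (1 + 4 * N) * c := by
  have hsum := norm_tsum_sub_tsum_le L.toEquiv (hg.encard_support_xst_le hgN t)
    (hf.encard_support_xst_le hfN (L t)) fun r => hf.abs_xst_sub_le hg h r t
  rw [treeHeight_eq, treeHeight_eq, sub_sub_sub_comm]
  refine (abs_sub _ _).trans ((add_le_add (h t) hsum).trans_eq ?_)
  ring

lemma abs_dT_sub_le (hf : IsExcursion f) (hg : IsExcursion g) (h : ∀ x, |g x - f (L x)| ≤ c)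
    (hfN : (jump f).support.encard ≤ N) (hgN : (jump g).support.encard ≤ N) {s t : ℝ}
    (hs : 0 ≤ s) (ht : 0 ≤ t) (hLs : 0 ≤ L s) (hLt : 0 ≤ L t) :
    |dT g s t - dT f (L s) (L t)| ≤ 4 * (1 + 4 * N) * c := by
  have hh := hf.abs_treeHeight_sub_le hg h hfN hgN
  have hinf := abs_infIcc_sub_le hf.bddBelow_treeHeight hg.bddBelow_treeHeight L hh
    (min_le_max (a := s) (b := t))
  rw [L.monotone.map_min, L.monotone.map_max] at hinf
  rw [hg.dT_eq hs ht, hf.dT_eq hLs hLt]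
  rw [abs_le] at hinf ⊢
  have hhs := abs_le.1 (hh s)
  have hht := abs_le.1 (hh t)
  constructor <;> linarith

lemma abs_dL_sub_le (hf : IsExcursion f) (hg : IsExcursion g) (h : ∀ x, |g x - f (L x)| ≤ c)
    (hfN : (jump f).support.encard ≤ N) (hgN : (jump g).support.encard ≤ N) {s t : ℝ}
    (hs : 0 ≤ s) (ht : 0 ≤ t) (hLs : 0 ≤ L s) (hLt : 0 ≤ L t) :
    |dL g s t - dL f (L s) (L t)| ≤ 12 * N * c := by
  rw [hg.dL_eq hs ht, hf.dL_eq hLs hLt]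
  refine (norm_tsum_sub_tsum_le L.toEquiv (hg.encard_support_cdel_le hgN s t)
    (hf.encard_support_cdel_le hfN _ _) fun r => hf.abs_cdel_sub_le hg h r s t).trans_eq ?_
  ring

end IsExcursion

/-! ### Skorokhod convergence -/

lemma IncBij.exists_orderIso {l : ℝ → ℝ} (hl : IncBij l) :
    ∃ L : ℝ ≃o ℝ, EqOn L l (Icc 0 1) ∧ EqOn L id (Icc 0 1)ᶜ := by
  obtain ⟨hmono, hbij⟩ := hl
  set φ := (Icc (0 : ℝ) 1).piecewise l id
  have hin : EqOn φ l (Icc 0 1) := piecewise_eqOn _ _ _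
  have hout : EqOn φ id (Icc 0 1)ᶜ := piecewise_eqOn_compl _ _ _
  have hφ : StrictMono φ := fun x y hxy => by
    by_cases hx : x ∈ Icc (0 : ℝ) 1 <;> by_cases hy : y ∈ Icc (0 : ℝ) 1
    · simpa only [hin hx, hin hy] using hmono hx hy hxy
    · have hy1 : 1 < y := not_le.1 fun h => hy ⟨hx.1.trans hxy.le, h⟩
      simpa only [hin hx, hout hy, id] using (hbij.mapsTo hx).2.trans_lt hy1
    · have hx0 : x < 0 := not_le.1 fun h => hx ⟨h, hxy.le.trans hy.2⟩
      simpa only [hout hx, hin hy, id] using hx0.trans_le (hbij.mapsTo hy).1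
    · simpa only [hout hx, hout hy, id] using hxy
  have hsurj : Function.Surjective φ := fun y => by
    by_cases hy : y ∈ Icc (0 : ℝ) 1
    · obtain ⟨x, hx, rfl⟩ := hbij.surjOn hy
      exact ⟨x, hin hx⟩
    · exact ⟨y, hout hy⟩
  exact ⟨hφ.orderIsoOfSurjective φ hsurj, hin, hout⟩

namespace IsExcursion

variable {f g : ℝ → ℝ} {κ : ℝ}

lemma nonempty_skor_bounds (hf : IsExcursion f) (hg : IsExcursion g) :
    {c : ℝ | 0 ≤ c ∧ ∃ l : ℝ → ℝ, IncBij l ∧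
      ∀ x ∈ Icc (0 : ℝ) 1, |l x - x| ≤ c ∧ |g x - f (l x)| ≤ c}.Nonempty := by
  obtain ⟨A, hA⟩ := hf.bddAbove
  obtain ⟨B, hB⟩ := hg.bddAbove
  have hfA : ∀ x, f x ≤ A := forall_mem_range.1 hA
  have hgB : ∀ x, g x ≤ B := forall_mem_range.1 hB
  have hAB : 0 ≤ A + B := add_nonneg ((hf.zero_le 0).trans (hfA 0)) ((hg.zero_le 0).trans (hgB 0))
  refine ⟨A + B, hAB, id, ⟨strictMono_id.strictMonoOn _, bijOn_id _⟩, fun x _ => ⟨by simpa, ?_⟩⟩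
  rw [abs_le, id]
  constructor <;> linarith [hfA x, hgB x, hf.zero_le x, hg.zero_le x]

lemma exists_timeChange_of_skor_lt (hf : IsExcursion f) (hg : IsExcursion g) (h : skor g f < κ) :
    ∃ L : ℝ ≃o ℝ, MapsTo L (Icc 0 1) (Icc 0 1) ∧ ∀ x, |L x - x| ≤ κ ∧ |g x - f (L x)| ≤ κ := by
  obtain ⟨c, ⟨hc, l, hl, hlc⟩, hcκ⟩ := exists_lt_of_csInf_lt (hf.nonempty_skor_bounds hg) h
  obtain ⟨L, hin, hout⟩ := hl.exists_orderIso
  refine ⟨L, hl.2.mapsTo.congr hin.symm, fun x => ?_⟩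
  by_cases hx : x ∈ Icc (0 : ℝ) 1
  · rw [hin hx]
    exact (hlc x hx).imp (·.trans hcκ.le) (·.trans hcκ.le)
  · have hκ : 0 ≤ κ := hc.trans hcκ.le
    simp [hout hx, hf.zero_outside x hx, hg.zero_outside x hx, hκ]

lemma encard_support_jump_le_card (hf : IsExcursion f) {J : Finset ℝ}
    (hJ : ∀ t ∈ Icc (0 : ℝ) 1, 0 < jump f t → t ∈ J) : (jump f).support.encard ≤ J.card := by
  rw [← encard_coe_eq_coe_finsetCard]
  refine encard_le_encard fun t ht => ?_
  exact hJ t (by_contra fun h => ht (hf.jump_eq_zero h)) ((hf.zero_le_jump t).lt_of_ne' ht)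

/-- Each jump of `f` forces, once `2 * κ` is below its size, a jump of `F n` at the time matched
to it. -/
lemma encard_support_jump_le_of_tendsto_skor {ι : Type*} {l : Filter ι} [l.NeBot]
    {F : ι → ℝ → ℝ} {N : ℕ} (hf : IsExcursion f) (hF : ∀ n, IsExcursion (F n))
    (hconv : Tendsto (fun n => skor (F n) f) l (𝓝 0))
    (hN : ∀ n, (jump (F n)).support.encard ≤ N) : (jump f).support.encard ≤ N := by
  by_contra! hlt
  obtain ⟨T, hTf, hT⟩ := exists_subset_encard_eq (Order.add_one_le_of_lt hlt)
  have hfin : T.Finite := finite_of_encard_le_coe (k := N + 1) hT.le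
  have hsmall : ∀ᶠ κ : ℝ in 𝓝[>] 0, ∀ r ∈ T, 2 * κ < jump f r :=
    eventually_nhdsWithin_of_eventually_nhds <| hfin.eventually_all.2 fun r hr => by
      have hcont : Tendsto (fun κ : ℝ => 2 * κ) (𝓝 0) (𝓝 0) := by
        simpa using (continuous_const_mul (2 : ℝ)).tendsto 0
      exact hcont.eventually_lt_const ((hf.zero_le_jump r).lt_of_ne' (hTf hr))
  obtain ⟨κ, hκT, hκ⟩ := (hsmall.and self_mem_nhdsWithin).exists
  obtain ⟨n, hn⟩ := (hconv.eventually_lt_const hκ).exists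
  obtain ⟨L, -, hL⟩ := hf.exists_timeChange_of_skor_lt (hF n) hn
  have hsub : L.symm '' T ⊆ (jump (F n)).support := by
    rintro _ ⟨r, hr, rfl⟩ hzero
    have hle := hf.abs_jump_sub_le (hF n) (fun x => (hL x).2) (L.symm r)
    rw [hzero, L.apply_symm_apply, zero_sub, abs_neg] at hle
    exact (hκT r hr).not_ge ((le_abs_self _).trans hle)
  have hcard := (encard_le_encard hsub).trans (hN n)
  rw [L.symm.injective.encard_image, hT] at hcard
  exact absurd hcard (by exact_mod_cast N.lt_succ_self.not_ge)

end IsExcursion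

lemma tendstoUniformlyOn_of_dist_comp_le {ι α β : Type*} [PseudoMetricSpace α]
    [PseudoMetricSpace β] {K : Set α} {D : ι → α → β} {d : α → β} {l : Filter ι} {C : ℝ}
    (hK : IsCompact K) (hd : ContinuousOn d K)
    (h : ∀ κ > 0, ∀ᶠ n in l, ∃ Φ : α → α, MapsTo Φ K K ∧
      ∀ p ∈ K, dist (Φ p) p ≤ κ ∧ dist (D n p) (d (Φ p)) ≤ C * κ) :
    TendstoUniformlyOn D d l K := by
  refine Metric.tendstoUniformlyOn_iff.2 fun ε hε => ?_
  obtain ⟨δ, hδ, hdδ⟩ := Metric.uniformContinuousOn_iff.1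
    (hK.uniformContinuousOn_of_continuous hd) (ε / 2) (half_pos hε)
  have hsmall : ∀ᶠ κ in 𝓝[>] 0, C * κ < ε / 2 := by
    have hcont : Tendsto (fun κ => C * κ) (𝓝[>] 0) (𝓝 0) := by
      simpa using ((continuous_const_mul C).tendsto 0).mono_left nhdsWithin_le_nhds
    exact hcont.eventually_lt_const (half_pos hε)
  obtain ⟨κ, hκC, hκ, hκδ⟩ := (hsmall.and (Ioo_mem_nhdsGT hδ)).exists
  filter_upwards [h κ hκ] with n ⟨Φ, hΦ, hnear⟩ p hp
  obtain ⟨hΦp, hDp⟩ := hnear p hp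
  calc dist (d p) (D n p) ≤ dist (d p) (d (Φ p)) + dist (D n p) (d (Φ p)) := dist_triangle_right ..
    _ < ε / 2 + ε / 2 := by
      rw [dist_comm] at hΦp
      exact add_lt_add (hdδ p hp (Φ p) (hΦ hp) (hΦp.trans_lt hκδ)) (hDp.trans_lt hκC)
    _ = ε := add_halves ε

lemma IsExcursion.tendstoUniformlyOn_of_tendsto_skor {ι : Type*} {l : Filter ι} {f : ℝ → ℝ}
    {F : ι → ℝ → ℝ} {D : ι → ℝ → ℝ → ℝ} {d : ℝ → ℝ → ℝ} {C : ℝ} (hf : IsExcursion f)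
    (hF : ∀ n, IsExcursion (F n)) (hconv : Tendsto (fun n => skor (F n) f) l (𝓝 0))
    (hd : ContinuousOn (fun p : ℝ × ℝ => d p.1 p.2) (Icc 0 1 ×ˢ Icc 0 1))
    (h : ∀ n (L : ℝ ≃o ℝ) (c : ℝ), (∀ x, |F n x - f (L x)| ≤ c) → ∀ {s t : ℝ},
      0 ≤ s → 0 ≤ t → 0 ≤ L s → 0 ≤ L t → |D n s t - d (L s) (L t)| ≤ C * c) :
    TendstoUniformlyOn (fun n (p : ℝ × ℝ) => D n p.1 p.2) (fun p => d p.1 p.2) l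
      (Icc 0 1 ×ˢ Icc 0 1) := by
  refine tendstoUniformlyOn_of_dist_comp_le (C := C) (isCompact_Icc.prod isCompact_Icc) hd
    fun κ hκ => ?_
  filter_upwards [hconv.eventually_lt_const hκ] with n hn
  obtain ⟨L, hmaps, hL⟩ := hf.exists_timeChange_of_skor_lt (hF n) hn
  refine ⟨Prod.map L L, hmaps.prodMap hmaps, fun p hp => ⟨max_le (hL p.1).1 (hL p.2).1, ?_⟩⟩
  exact h n L κ (fun x => (hL x).2) hp.1.1 hp.2.1 (hmaps hp.1).1 (hmaps hp.2).1

theorem statement16 (f : ℝ → ℝ) (hf : IsExcursion f) (F : ℕ → ℝ → ℝ)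
    (hF : ∀ n, IsExcursion (F n))
    (hconv : Tendsto (fun n => skor (F n) f) atTop (𝓝 0))
    (N : ℕ) (hN : 1 ≤ N)
    (hjumps : ∀ n, ∃ s : Finset ℝ, s.card ≤ N ∧
        ∀ t ∈ Icc (0:ℝ) 1, 0 < jump (F n) t → t ∈ s) :
    TendstoUniformlyOn (fun n (p : ℝ × ℝ) => dL (F n) p.1 p.2)
        (fun p => dL f p.1 p.2) atTop (Icc (0:ℝ) 1 ×ˢ Icc (0:ℝ) 1) ∧
    TendstoUniformlyOn (fun n (p : ℝ × ℝ) => dT (F n) p.1 p.2)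
        (fun p => dT f p.1 p.2) atTop (Icc (0:ℝ) 1 ×ˢ Icc (0:ℝ) 1) ∧
    TendstoUniformlyOn (fun n (p : ℝ × ℝ) => dV (F n) p.1 p.2)
        (fun p => dV f p.1 p.2) atTop (Icc (0:ℝ) 1 ×ˢ Icc (0:ℝ) 1) := by
  have hFN : ∀ n, (jump (F n)).support.encard ≤ N := fun n => by
    obtain ⟨J, hJN, hJ⟩ := hjumps n
    exact ((hF n).encard_support_jump_le_card hJ).trans (Nat.cast_le.2 hJN)
  have hfN := hf.encard_support_jump_le_of_tendsto_skor hF hconv hFN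
  have hfin : (jump f).support.Finite := finite_of_encard_le_coe hfN
  have hdL := hf.tendstoUniformlyOn_of_tendsto_skor hF hconv (hf.continuousOn_dL hfin)
    fun n _ _ h => hf.abs_dL_sub_le (hF n) h hfN (hFN n)
  have hdT := hf.tendstoUniformlyOn_of_tendsto_skor hF hconv (hf.continuousOn_dT hfin)
    fun n _ _ h => hf.abs_dT_sub_le (hF n) h hfN (hFN n)
  refine ⟨hdL, hdT, ?_⟩
  simp only [dV, two_mul]
  exact hdT.add (hdL.add hdL)
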